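/- Let d ≥ 1 and let Σ_p and Σ_q be symmetric positive definite d×d real matrices such that Σ_p − Σ_q is positive semidefinite. Let φ_{m,Σ}(x) := (2π)^{−d/2} det(Σ)^{−1/2} exp(−(1/2)(x−m)ᵀΣ^{−1}(x−m)) denote the multivariate Gaussian density with mean m and covariance Σ. Then for all μ, μ' ∈ ℝ^d: ∫_{ℝ^d} φ_{μ',Σ_p}(x) · φ_{μ,Σ_q}(x)/φ_{μ,Σ_p}(x) dx ≤ 1. That is, for every μ, the likelihood ratio between N(μ, Σ_q) and N(μ, Σ_p) is an e-variable for the full Gaussian location null hypothesis {N(μ', Σ_p) : μ' ∈ ℝ^d}. -/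

import Mathlib

/-!
With `δ = μ' - μ`, the quadratic term of `Sp⁻¹` cancels in
`φ_{μ',Sp} · φ_{μ,Sq} / φ_{μ,Sp}`. Completing the square with `w = Sp⁻¹ δ` shows that this
integrand equals `exp (-(1/2) wᵀ (Sp - Sq) w)` times the density of `N(μ + Sq w, Sq)`
(`quadratic_identity`). The constant is at most `1` because `Sp - Sq` is positive semidefinite, and
the density has integral `1` (`integral_mgauss`), by factoring `Sq⁻¹ = Bᵀ B` and changing variables
to reduce to a product of one-dimensional Gaussian integrals.
-/

open Real MeasureTheory Matrix

/-- The density of the `d`-variate normal distribution with mean `m` and symmetric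
positive definite covariance matrix `S`. -/
noncomputable def mgauss {d : ℕ} (m : Fin d → ℝ) (S : Matrix (Fin d) (Fin d) ℝ)
    (x : Fin d → ℝ) : ℝ :=
  Real.exp (-(1 / 2) * ((x - m) ⬝ᵥ (S⁻¹ *ᵥ (x - m))))
    / Real.sqrt ((2 * Real.pi) ^ d * S.det)

open scoped MatrixOrder in
/-- A positive definite matrix has an inverse of the form `Bᵀ * B`. -/
lemma exists_inv_factor {d : ℕ} {S : Matrix (Fin d) (Fin d) ℝ} (hS : S.PosDef) :
    ∃ B : Matrix (Fin d) (Fin d) ℝ, S⁻¹ = Bᵀ * B := by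
  obtain ⟨B, hB⟩ := CStarAlgebra.nonneg_iff_eq_star_mul_self.mp hS.inv.posSemidef.nonneg
  exact ⟨B, by rw [hB, star_eq_conjTranspose, conjTranspose_eq_transpose_of_trivial]⟩

lemma integral_standard_gaussian (d : ℕ) :
    ∫ x : Fin d → ℝ, Real.exp (-(1 / 2) * (x ⬝ᵥ x)) = Real.sqrt ((2 * Real.pi) ^ d) := by
  have h : ∀ x : Fin d → ℝ,
      Real.exp (-(1 / 2) * (x ⬝ᵥ x)) = ∏ i, Real.exp (-(1 / 2) * x i ^ 2) := by
    intro x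
    rw [← Real.exp_sum, ← Finset.mul_sum]
    simp [dotProduct, sq]
  simp_rw [h]
  rw [integral_fintype_prod_volume_eq_pow (fun t : ℝ => Real.exp (-(1 / 2) * t ^ 2)),
    integral_gaussian, Fintype.card_fin]
  symm
  rw [Real.sqrt_eq_iff_mul_self_eq (by positivity) (by positivity), ← mul_pow,
    Real.mul_self_sqrt (by positivity)]
  congr 1
  ring

lemma integral_mgauss {d : ℕ} (m : Fin d → ℝ) {S : Matrix (Fin d) (Fin d) ℝ} (hS : S.PosDef) :
    ∫ x, mgauss m S x = 1 := by
  obtain ⟨B, hB⟩ := exists_inv_factor hS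
  have hdet : S.det⁻¹ = B.det ^ 2 := by
    rw [← Ring.inverse_eq_inv', ← Matrix.det_nonsing_inv, hB, Matrix.det_mul,
      Matrix.det_transpose, sq]
  have hpos : 0 < S.det := hS.det_pos
  have hB0 : B.det ≠ 0 := by
    intro h
    rw [h] at hdet
    simp [hpos.ne'] at hdet
  have hsqrt : Real.sqrt S.det = |B.det|⁻¹ := by
    rw [← inv_inv S.det, hdet, Real.sqrt_inv, Real.sqrt_sq_eq_abs]
  have hquad : ∀ x : Fin d → ℝ, x ⬝ᵥ (S⁻¹ *ᵥ x) = (B *ᵥ x) ⬝ᵥ (B *ᵥ x) := by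
    intro x
    rw [hB, ← Matrix.mulVec_mulVec, Matrix.dotProduct_mulVec, Matrix.vecMul_transpose]
  have hint : ∫ x : Fin d → ℝ, Real.exp (-(1 / 2) * ((B *ᵥ x) ⬝ᵥ (B *ᵥ x)))
      = |B.det|⁻¹ * Real.sqrt ((2 * Real.pi) ^ d) := by
    have hcont : Continuous fun y : Fin d → ℝ => Real.exp (-(1 / 2) * (y ⬝ᵥ y)) := by
      unfold dotProduct
      fun_prop
    have key := integral_map (μ := (volume : Measure (Fin d → ℝ)))
      (φ := Matrix.toLin' B) (LinearMap.continuous_of_finiteDimensional _).aemeasurable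
      (f := fun y : Fin d → ℝ => Real.exp (-(1 / 2) * (y ⬝ᵥ y))) hcont.aestronglyMeasurable
    rw [Real.map_matrix_volume_pi_eq_smul_volume_pi hB0, integral_smul_measure,
      integral_standard_gaussian, ENNReal.toReal_ofReal (abs_nonneg _), abs_inv] at key
    simpa using key.symm
  unfold mgauss
  rw [integral_div, integral_sub_right_eq_self
    (fun x : Fin d → ℝ => Real.exp (-(1 / 2) * (x ⬝ᵥ (S⁻¹ *ᵥ x)))) m]
  simp_rw [hquad]
  rw [hint, Real.sqrt_mul (by positivity), hsqrt, mul_comm]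
  refine div_self (mul_ne_zero ?_ ?_)
  · positivity
  · simpa using hB0

lemma dotProduct_mulVec_comm {d : ℕ} {A : Matrix (Fin d) (Fin d) ℝ} (hA : A.IsHermitian)
    (u v : Fin d → ℝ) : u ⬝ᵥ (A *ᵥ v) = v ⬝ᵥ (A *ᵥ u) := by
  have hT : Aᵀ = A := by rwa [← conjTranspose_eq_transpose_of_trivial]
  rw [Matrix.dotProduct_mulVec, ← Matrix.mulVec_transpose, hT, dotProduct_comm]

/-- Completion of the square in the exponent of the integrand, where `y = x - μ` and the shift
`μ' - μ` is written as `Sp *ᵥ w`. -/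
lemma quadratic_identity {d : ℕ} {Sp Sq : Matrix (Fin d) (Fin d) ℝ}
    (hSp : Sp.PosDef) (hSq : Sq.PosDef) (y w : Fin d → ℝ) :
    (y - Sp *ᵥ w) ⬝ᵥ (Sp⁻¹ *ᵥ (y - Sp *ᵥ w)) + y ⬝ᵥ (Sq⁻¹ *ᵥ y) - y ⬝ᵥ (Sp⁻¹ *ᵥ y)
      = w ⬝ᵥ ((Sp - Sq) *ᵥ w) + (y - Sq *ᵥ w) ⬝ᵥ (Sq⁻¹ *ᵥ (y - Sq *ᵥ w)) := by
  have hinv : ∀ {S : Matrix (Fin d) (Fin d) ℝ}, S.PosDef → S⁻¹ *ᵥ (S *ᵥ w) = w := by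
    intro S hS
    rw [Matrix.mulVec_mulVec, Matrix.nonsing_inv_mul _ hS.det_pos.ne'.isUnit, Matrix.one_mulVec]
  have hexp : ∀ {S : Matrix (Fin d) (Fin d) ℝ}, S.PosDef →
      (y - S *ᵥ w) ⬝ᵥ (S⁻¹ *ᵥ (y - S *ᵥ w))
        = y ⬝ᵥ (S⁻¹ *ᵥ y) - 2 * (y ⬝ᵥ w) + w ⬝ᵥ (S *ᵥ w) := by
    intro S hS
    rw [Matrix.mulVec_sub, dotProduct_sub, sub_dotProduct, sub_dotProduct, hinv hS,
      dotProduct_mulVec_comm hS.inv.isHermitian (S *ᵥ w) y, hinv hS, dotProduct_comm (S *ᵥ w) w]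
    ring
  rw [hexp hSp, hexp hSq, Matrix.sub_mulVec, dotProduct_sub]
  ring

/-- if `Σ_p` and `Σ_q` are symmetric positive definite with `Σ_p − Σ_q`
positive semidefinite, then for every mean `μ` the likelihood ratio between `N(μ, Σ_q)`
and `N(μ, Σ_p)` has expectation at most `1` under every element `N(μ', Σ_p)` of the full
Gaussian location null hypothesis, i.e. it is an e-variable for that null. -/
theorem gaussian_location_distinct_covariance_simple_evariable
    (d : ℕ) (hd : 1 ≤ d)
    (Sp Sq : Matrix (Fin d) (Fin d) ℝ)
    (hSp : Sp.PosDef) (hSq : Sq.PosDef) (hdiff : (Sp - Sq).PosSemidef)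
    (μ μ' : Fin d → ℝ) :
    ∫ x : Fin d → ℝ, mgauss μ' Sp x * (mgauss μ Sq x / mgauss μ Sp x) ≤ 1 := by
  set w : Fin d → ℝ := Sp⁻¹ *ᵥ (μ' - μ) with hw
  have hshift : Sp *ᵥ w = μ' - μ := by
    rw [hw, Matrix.mulVec_mulVec, Matrix.mul_nonsing_inv _ hSp.det_pos.ne'.isUnit,
      Matrix.one_mulVec]
  have hpoint : ∀ x : Fin d → ℝ, mgauss μ' Sp x * (mgauss μ Sq x / mgauss μ Sp x)
      = Real.exp (-(1 / 2) * (w ⬝ᵥ ((Sp - Sq) *ᵥ w))) * mgauss (μ + Sq *ᵥ w) Sq x := by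
    intro x
    have hp : Real.sqrt ((2 * Real.pi) ^ d * Sp.det) ≠ 0 := by
      have := hSp.det_pos
      positivity
    have hq := quadratic_identity hSp hSq (x - μ) w
    have hx : x - μ - Sp *ᵥ w = x - μ' := by rw [hshift]; abel
    have hy : x - μ - Sq *ᵥ w = x - (μ + Sq *ᵥ w) := by abel
    rw [hx, hy] at hq
    unfold mgauss
    rw [← mul_div_assoc (Real.exp (-(1 / 2) * (w ⬝ᵥ ((Sp - Sq) *ᵥ w)))), ← Real.exp_add,
      ← mul_add, ← hq, mul_sub, mul_add, Real.exp_sub, Real.exp_add]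
    field_simp
  simp_rw [hpoint]
  rw [integral_const_mul, integral_mgauss _ hSq, mul_one, Real.exp_le_one_iff]
  have := hdiff.dotProduct_mulVec_nonneg w
  rw [star_trivial] at this
  linarith
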